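/- Let ν be a real number with ν ≥ 2. For every integer k ≥ 1 one has λ⁺_{ν−1,k+1} < λ⁺_{ν−2,k+2} < λ⁺_{ν−1,k+2}, where λ⁺_{ν−1,m} denotes the m-th positive zero of z ↦ J_{ν−1}(z) + J_ν(z) and λ⁺_{ν−2,m} the m-th positive zero of z ↦ J_{ν−2}(z) + J_{ν−1}(z); that is, the positive zeroes of the sums of Bessel functions of consecutive orders interlace. -/

import Mathlib

/-- Bessel function of the first kind of real order `ν`, defined via its power series
`J_ν(z) = ∑ₘ (−1)^m / (m! Γ(ν+m+1)) (z/2)^(ν+2m)` (with real-exponent powers). -/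
noncomputable def besselJ (ν z : ℝ) : ℝ :=
  ∑' m : ℕ, ((-1 : ℝ) ^ m / (Nat.factorial m * Real.Gamma (ν + m + 1))) *
    (z / 2) ^ (ν + 2 * (m : ℝ))

/-- `x` (indexed by `k ≥ 1`) enumerates the positive zeroes of `f`: it is strictly
increasing on indices `k ≥ 1`, each `x k` is a positive zero of `f`, and every positive
zero of `f` is some `x k`. -/
def EnumPosZeros (f : ℝ → ℝ) (x : ℕ → ℝ) : Prop :=
  StrictMonoOn x (Set.Ici 1) ∧ (∀ k, 1 ≤ k → 0 < x k ∧ f (x k) = 0) ∧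
    ∀ z : ℝ, 0 < z → f z = 0 → ∃ k, 1 ≤ k ∧ x k = z

noncomputable def bcf (μ : ℝ) (m : ℕ) : ℝ := (-1 : ℝ) ^ m / (Nat.factorial m * Real.Gamma (μ + m + 1))

noncomputable def bE (μ t : ℝ) : ℝ := ∑' m : ℕ, bcf μ m * t ^ m

lemma besselJ_eq_bE (μ z : ℝ) (hz : 0 < z) : besselJ μ z = (z / 2) ^ μ * bE μ (z ^ 2 / 4) := by
  unfold besselJ bE
  rw [← tsum_mul_left]
  congr 1
  ext m
  have h2 : (0:ℝ) < z / 2 := by positivity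
  have : (z / 2) ^ (μ + 2 * (m : ℝ)) = (z / 2) ^ μ * (z ^ 2 / 4) ^ m := by
    rw [Real.rpow_add h2]
    congr 1
    have : (2 * (m : ℝ)) = ((2 * m : ℕ) : ℝ) := by push_cast; ring
    rw [this, Real.rpow_natCast, pow_mul]
    congr 1
    ring
  rw [this, bcf]
  ring

lemma bgamma_le (μ : ℝ) (hμ : 0 ≤ μ) (m : ℕ) : Real.Gamma (μ + 1) ≤ Real.Gamma (μ + m + 1) := by
  induction m with
  | zero => simp
  | succ n ih =>
    have h : μ + ((n + 1 : ℕ) : ℝ) + 1 = (μ + n + 1) + 1 := by push_cast; ring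
    have hp : 0 < μ + n + 1 := by positivity
    rw [h, Real.Gamma_add_one hp.ne']
    have := Real.Gamma_pos_of_pos hp
    have hn : (0:ℝ) ≤ n := Nat.cast_nonneg n
    nlinarith

lemma bcf_abs_le (μ : ℝ) (hμ : 0 ≤ μ) (m : ℕ) :
    |bcf μ m| ≤ (Real.Gamma (μ + 1))⁻¹ * (1 / (Nat.factorial m : ℝ)) := by
  have h0 : 0 < Real.Gamma (μ + 1) := Real.Gamma_pos_of_pos (by positivity)
  have h1 : 0 < Real.Gamma (μ + m + 1) := Real.Gamma_pos_of_pos (by positivity)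
  have h2 : (0:ℝ) < Nat.factorial m := by positivity
  unfold bcf
  rw [abs_div, abs_pow, abs_neg, abs_one, one_pow, abs_of_pos (by positivity), one_div, mul_inv, mul_comm, one_div]
  gcongr
  exact bgamma_le μ hμ m

lemma bE_summable (μ : ℝ) (hμ : 0 ≤ μ) (t : ℝ) : Summable (fun m => bcf μ m * t ^ m) := by
  apply Summable.of_norm_bounded (g := fun m => (Real.Gamma (μ + 1))⁻¹ * (|t| ^ m / (Nat.factorial m : ℝ)))
  · exact (Real.summable_pow_div_factorial |t|).mul_left _
  · intro m
    rw [Real.norm_eq_abs, abs_mul, abs_pow]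
    calc _ ≤ ((Real.Gamma (μ + 1))⁻¹ * (1 / (Nat.factorial m : ℝ))) * |t| ^ m := by
          gcongr
          exact bcf_abs_le μ hμ m
      _ = _ := by ring

lemma bcf_succ (μ : ℝ) (m : ℕ) : bcf μ (m + 1) * ((m + 1 : ℕ) : ℝ) = - bcf (μ + 1) m := by
  unfold bcf
  have : μ + ((m + 1 : ℕ) : ℝ) + 1 = μ + 1 + m + 1 := by push_cast; ring
  rw [this, Nat.factorial_succ, pow_succ]
  have h : ((m + 1 : ℕ) : ℝ) ≠ 0 := by positivity
  push_cast at h ⊢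
  rw [← mul_div_mul_right ((-1:ℝ) ^ m) _ h, ← neg_div]
  rw [div_mul_eq_mul_div]
  congr 1 <;> ring

lemma bE_hasDerivAt (μ : ℝ) (hμ : 0 ≤ μ) (t : ℝ) : HasDerivAt (bE μ) (- bE (μ + 1) t) t := by
  set R := |t| + 1 with hR
  have hR0 : 0 ≤ R := by positivity
  have key := hasDerivAt_tsum_of_isPreconnected (𝕜 := ℝ)
    (g := fun m x => bcf μ m * x ^ m) (g' := fun m x => bcf μ m * (m * x ^ (m - 1)))
    (u := fun m => (Real.Gamma (μ + 1))⁻¹ * (1 / (Nat.factorial m : ℝ)) * (m * R ^ (m - 1)))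
    (t := Metric.ball 0 R) (y₀ := 0) (y := t) ?_ Metric.isOpen_ball
    (convex_ball _ _).isPreconnected ?_ ?_ ?_ (bE_summable μ hμ 0) ?_
  · have e : (∑' m : ℕ, bcf μ m * (m * t ^ (m - 1))) = - bE (μ + 1) t := by
      have hs : Summable (fun m : ℕ => bcf μ m * (m * t ^ (m - 1))) := by
        rw [← summable_nat_add_iff 1]
        have := (bE_summable (μ + 1) (by positivity) t).neg
        refine this.congr ?_
        intro m
        rw [← mul_assoc, bcf_succ]
        simp
      rw [hs.tsum_eq_zero_add, bE, ← tsum_neg]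
      simp only [Nat.cast_zero, zero_mul, mul_zero, zero_add]
      congr 1
      ext m
      rw [← mul_assoc, bcf_succ]
      simp
    rw [← e]
    exact key
  · rw [← summable_nat_add_iff 1]
    have := ((Real.summable_pow_div_factorial R).mul_left (Real.Gamma (μ + 1))⁻¹)
    refine this.congr ?_
    intro m
    rw [Nat.factorial_succ]
    have h : ((m + 1 : ℕ) : ℝ) ≠ 0 := by positivity
    have h2 : (Nat.factorial m : ℝ) ≠ 0 := by positivity
    simp only [Nat.add_sub_cancel]
    rw [Nat.cast_mul]
    field_simp
  · intro m y _
    exact (hasDerivAt_pow m y).const_mul _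
  · intro m y hy
    have hy' : |y| ≤ R := by
      have := mem_ball_zero_iff.1 hy
      rw [Real.norm_eq_abs] at this
      exact this.le
    rw [Real.norm_eq_abs, abs_mul, abs_mul, abs_pow, Nat.abs_cast]
    gcongr
    exact bcf_abs_le μ hμ m
  · simp; positivity
  · simp [hR]

lemma bE_rec (μ : ℝ) (hμ : 1 ≤ μ) (t : ℝ) : bE (μ - 1) t + t * bE (μ + 1) t = μ * bE μ t := by
  have s1 := bE_summable (μ - 1) (by linarith) t
  have s2 := bE_summable (μ + 1) (by linarith) t
  have s3 := bE_summable μ (by linarith) t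
  have hc : ∀ m : ℕ, bcf (μ - 1) m = (μ + m) * bcf μ m := by
    intro m
    unfold bcf
    have hp : 0 < μ + m := by positivity
    have e : μ - 1 + m + 1 = μ + m := by ring
    rw [e, Real.Gamma_add_one hp.ne']
    have := (Real.Gamma_pos_of_pos hp).ne'
    have h2 : (Nat.factorial m : ℝ) ≠ 0 := by positivity
    field_simp
  have hE : bE (μ - 1) t - μ * bE μ t = ∑' m : ℕ, (bcf μ m * m) * t ^ m := by
    unfold bE
    rw [← tsum_mul_left, ← s1.tsum_sub (s3.mul_left μ)]
    congr 1
    ext m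
    rw [hc]; ring
  have hs : Summable (fun m : ℕ => (bcf μ m * m) * t ^ m) := by
    refine (s1.sub (s3.mul_left μ)).congr ?_
    intro m
    rw [hc]; ring
  have h4 : (∑' m : ℕ, (bcf μ m * m) * t ^ m) = - (t * bE (μ + 1) t) := by
    rw [hs.tsum_eq_zero_add, bE, ← tsum_mul_left, ← tsum_neg]
    simp only [Nat.cast_zero, zero_mul, mul_zero, zero_add]
    congr 1
    ext m
    rw [bcf_succ]
    ring
  linarith

lemma bJ_add_one (μ z : ℝ) (hz : 0 < z) :
    besselJ (μ + 1) z = (z / 2) ^ μ * (z / 2) * bE (μ + 1) (z ^ 2 / 4) := by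
  rw [besselJ_eq_bE _ _ hz, Real.rpow_add (by positivity), Real.rpow_one]

lemma bJ_rec (μ z : ℝ) (hμ : 1 ≤ μ) (hz : 0 < z) :
    besselJ (μ - 1) z + besselJ (μ + 1) z = 2 * μ / z * besselJ μ z := by
  have h := bE_rec μ hμ (z ^ 2 / 4)
  have e := bJ_add_one (μ - 1) z hz
  rw [sub_add_cancel] at e
  have p : (z / 2) ^ μ = (z / 2) ^ (μ - 1) * (z / 2) := by
    rw [Real.rpow_sub_one (by positivity)]; field_simp
  rw [bJ_add_one μ z hz, e, besselJ_eq_bE (μ - 1) z hz, p]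
  have : 2 * μ / z * ((z / 2) ^ (μ - 1) * (z / 2) * bE μ (z ^ 2 / 4))
     = (z / 2) ^ (μ - 1) * (μ * bE μ (z ^ 2 / 4)) := by field_simp
  rw [this, ← h]
  ring

lemma bJ_hasDerivAt (μ z : ℝ) (hμ : 0 ≤ μ) (hz : 0 < z) :
    HasDerivAt (besselJ μ) (- besselJ (μ + 1) z + μ / z * besselJ μ z) z := by
  have h1 : HasDerivAt (fun z : ℝ => z ^ 2 / 4) (z / 2) z := by
    have := (hasDerivAt_pow 2 z).div_const 4
    exact this.congr_deriv (by norm_num; ring)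
  have h2 : HasDerivAt (fun z : ℝ => (z / 2) ^ μ) (μ / z * (z / 2) ^ μ) z := by
    have := ((hasDerivAt_id z).div_const 2).rpow_const (p := μ) (Or.inl (by simp; positivity))
    refine this.congr_deriv ?_
    change 1 / 2 * μ * (z / 2) ^ (μ - 1) = _
    rw [Real.rpow_sub_one (by positivity)]; field_simp
  have h3 := h2.mul ((bE_hasDerivAt μ hμ (z ^ 2 / 4)).comp z h1)
  have h4 : HasDerivAt (besselJ μ) _ z := h3.congr_of_eventuallyEq (by
    filter_upwards [lt_mem_nhds hz] with y hy
    simp [besselJ_eq_bE μ y hy])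
  convert h4 using 1
  rw [bJ_add_one μ z hz, besselJ_eq_bE μ z hz]
  simp only [Function.comp]
  ring

lemma bJ_pos_near (μ : ℝ) (hμ : 0 ≤ μ) : ∃ ε > 0, ∀ z, 0 < z → z < ε → 0 < besselJ μ z := by
  have hc : ContinuousAt (fun z : ℝ => bE μ (z ^ 2 / 4)) 0 := by
    apply ContinuousAt.comp (g := bE μ) (f := fun z : ℝ => z ^ 2 / 4)
    · exact (bE_hasDerivAt μ hμ _).continuousAt
    · fun_prop
  have h0 : 0 < bE μ ((0:ℝ) ^ 2 / 4) := by
    have : bE μ ((0:ℝ) ^ 2 / 4) = bcf μ 0 := by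
      unfold bE
      rw [tsum_eq_single 0]
      · simp
      · intro m hm; simp [hm]
    rw [this]
    unfold bcf
    have : 0 < Real.Gamma (μ + 1) := Real.Gamma_pos_of_pos (by positivity)
    simp [this]
  have := hc.eventually (lt_mem_nhds h0)
  obtain ⟨ε, hε, h⟩ := Metric.eventually_nhds_iff.1 this
  refine ⟨ε, hε, fun z hz hzε => ?_⟩
  rw [besselJ_eq_bE μ z hz]
  have := h (y := z) (by rw [Real.dist_eq, sub_zero, abs_of_pos hz]; exact hzε)
  positivity

/-- No common zero. -/
lemma bJ_no_common (a z : ℝ) (ha : 0 ≤ a) (hz : 0 < z) (h1 : besselJ a z = 0)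
    (h2 : besselJ (a + 1) z = 0) : False := by
  have hder : ∀ x : ℝ, 0 < x → HasDerivAt
      (fun x => x ^ (2 * a + 2) * (besselJ a x ^ 2 + besselJ (a + 1) x ^ 2))
      (x ^ (2 * a + 1) * ((4 * a + 2) * besselJ a x ^ 2)) x := by
    intro x hx
    have d1 := bJ_hasDerivAt a x ha hx
    have d2 := bJ_hasDerivAt (a + 1) x (by linarith) hx
    have hr := bJ_rec (a + 1) x (by linarith) hx
    rw [add_sub_cancel_right] at hr
    have d3 := (Real.hasDerivAt_rpow_const (x := x) (p := 2 * a + 2) (Or.inl hx.ne'))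
    have := d3.mul ((d1.pow 2).add (d2.pow 2))
    refine this.congr_deriv ?_
    have hr' : besselJ (a + 1 + 1) x = 2 * (a + 1) / x * besselJ (a + 1) x - besselJ a x := by
      linarith
    rw [hr']
    have e1 : x ^ (2 * a + 2) = x ^ (2 * a + 1) * x := by
      rw [← Real.rpow_add_one hx.ne']; ring_nf
    have e2 : x ^ (2 * a + 2 - 1) = x ^ (2 * a + 1) := by ring_nf
    simp only [Pi.add_apply, Pi.pow_apply]
    rw [e1, e2]
    field_simp
    push_cast
    ring
  have hmono : MonotoneOn
      (fun x => x ^ (2 * a + 2) * (besselJ a x ^ 2 + besselJ (a + 1) x ^ 2)) (Set.Ioi 0) := by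
    apply monotoneOn_of_deriv_nonneg (convex_Ioi 0)
    · intro x hx
      exact (hder x hx).continuousAt.continuousWithinAt
    · intro x hx
      rw [interior_Ioi] at hx
      exact (hder x hx).differentiableAt.differentiableWithinAt
    · intro x hx
      rw [interior_Ioi] at hx
      rw [(hder x hx).deriv]
      have : (0:ℝ) < x := hx
      positivity
  obtain ⟨ε, hε, hp⟩ := bJ_pos_near a ha
  set y := min (ε / 2) z with hy
  have hy0 : 0 < y := lt_min (by linarith) hz
  have := hmono hy0 hz (min_le_right _ _)
  have hJ := hp y hy0 (lt_of_le_of_lt (min_le_left _ _) (by linarith))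
  simp only [h1, h2] at this
  norm_num at this
  have h3 : 0 < y ^ (2 * a + 2) * (besselJ a y ^ 2 + besselJ (a + 1) y ^ 2) := by positivity
  linarith

lemma right_sign (G : ℝ → ℝ) (x y g : ℝ) (hxy : x < y) (hG : G x = 0) (h : HasDerivAt G g x)
    (hg : 0 < g) : ∃ c, x < c ∧ c < y ∧ 0 < G c := by
  have h1 := (hasDerivAt_iff_tendsto_slope.1 h).eventually (lt_mem_nhds hg)
  have h2 := h1.filter_mono (nhdsWithin_mono x (show Set.Ioi x ⊆ {x}ᶜ from fun z hz => ne_of_gt hz))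
  obtain ⟨c, hc, hcI⟩ := (h2.and (Ioo_mem_nhdsGT hxy)).exists
  refine ⟨c, hcI.1, hcI.2, ?_⟩
  rw [slope_def_field, hG, sub_zero] at hc
  have := sub_pos.2 hcI.1
  exact (div_pos_iff_of_pos_right this).1 hc

lemma left_sign (G : ℝ → ℝ) (x y g : ℝ) (hxy : x < y) (hG : G y = 0) (h : HasDerivAt G g y)
    (hg : 0 < g) : ∃ c, x < c ∧ c < y ∧ G c < 0 := by
  have h' : HasDerivAt G g (-(-y)) := by rwa [neg_neg]
  have hd : HasDerivAt (fun t => - G (-t)) g (-y) := by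
    have := (h'.comp (-y) (hasDerivAt_neg (-y))).neg
    exact this.congr_deriv (by ring)
  obtain ⟨c, h1, h2, h3⟩ := right_sign _ (-y) (-x) g (by linarith) (by simp [hG]) hd hg
  exact ⟨-c, by linarith, by linarith, by linarith⟩

lemma ivt_zero (G : ℝ → ℝ) (x y : ℝ) (hxy : x < y) (hc : ContinuousOn G (Set.Icc x y))
    (h : G x * G y < 0) : ∃ c, x < c ∧ c < y ∧ G c = 0 := by
  rcases mul_neg_iff.1 h with ⟨h1, h2⟩ | ⟨h1, h2⟩
  · obtain ⟨c, hc1, hc2⟩ := intermediate_value_Ioo' hxy.le hc ⟨h2, h1⟩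
    exact ⟨c, hc1.1, hc1.2, hc2⟩
  · obtain ⟨c, hc1, hc2⟩ := intermediate_value_Ioo hxy.le hc ⟨h1, h2⟩
    exact ⟨c, hc1.1, hc1.2, hc2⟩

lemma zero_between_pos (G : ℝ → ℝ) (x y g1 g2 : ℝ) (hxy : x < y)
    (hc : ContinuousOn G (Set.Icc x y)) (hx : G x = 0) (hy : G y = 0)
    (h1 : HasDerivAt G g1 x) (h2 : HasDerivAt G g2 y) (hg1 : 0 < g1) (hg2 : 0 < g2) :
    ∃ c, x < c ∧ c < y ∧ G c = 0 := by
  obtain ⟨c, c1, c2, c3⟩ := right_sign G x y g1 hxy hx h1 hg1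
  obtain ⟨d, d1, d2, d3⟩ := left_sign G c y g2 c2 hy h2 hg2
  obtain ⟨e, e1, e2, e3⟩ := ivt_zero G c d d1 (hc.mono (Set.Icc_subset_Icc c1.le d2.le))
    (mul_neg_of_pos_of_neg c3 d3)
  exact ⟨e, by linarith, by linarith, e3⟩

lemma zero_between (G : ℝ → ℝ) (x y g1 g2 : ℝ) (hxy : x < y)
    (hc : ContinuousOn G (Set.Icc x y)) (hx : G x = 0) (hy : G y = 0)
    (h1 : HasDerivAt G g1 x) (h2 : HasDerivAt G g2 y) (hg : 0 < g1 * g2) :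
    ∃ c, x < c ∧ c < y ∧ G c = 0 := by
  rcases mul_pos_iff.1 hg with ⟨a, b⟩ | ⟨a, b⟩
  · exact zero_between_pos G x y g1 g2 hxy hc hx hy h1 h2 a b
  · obtain ⟨c, c1, c2, c3⟩ := zero_between_pos (fun t => - G t) x y (-g1) (-g2) hxy hc.neg
      (by simp [hx]) (by simp [hy]) h1.neg h2.neg (by linarith) (by linarith)
    exact ⟨c, c1, c2, by linarith⟩

/-- If `G` vanishes at consecutive `x < y` and `s G' F > 0` at zeroes, `F` vanishes in between. -/
lemma zero_interlace (G F : ℝ → ℝ) (G' : ℝ → ℝ) (s : ℝ) (x y : ℝ) (hx0 : 0 < x) (hxy : x < y)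
    (hG : ∀ z, 0 < z → HasDerivAt G (G' z) z) (hF : ∀ z, 0 < z → ContinuousAt F z)
    (hs : ∀ z, 0 < z → G z = 0 → 0 < s * (G' z * F z))
    (hx : G x = 0) (hy : G y = 0) (hno : ∀ c, x < c → c < y → G c ≠ 0) :
    ∃ c, x < c ∧ c < y ∧ F c = 0 := by
  have hy0 : 0 < y := hx0.trans hxy
  have a1 := hs x hx0 hx
  have a2 := hs y hy0 hy
  apply ivt_zero F x y hxy
  · intro z hz
    exact (hF z (lt_of_lt_of_le hx0 hz.1)).continuousWithinAt
  by_contra hcon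
  push Not at hcon
  have a3 : 0 < (s * s) * (G' x * G' y) * (F x * F y) := by
    have := mul_pos a1 a2
    linarith
  have a4 : 0 < (s * s) * (G' x * G' y) := pos_of_mul_pos_left a3 hcon
  have a5 : 0 < G' x * G' y := pos_of_mul_pos_right a4 (mul_self_nonneg s)
  obtain ⟨c, c1, c2, c3⟩ := zero_between G x y _ _ hxy
    (fun z hz => (hG z (lt_of_lt_of_le hx0 hz.1)).continuousAt.continuousWithinAt)
    hx hy (hG x hx0) (hG y hy0) a5
  exact hno c c1 c2 c3

lemma enum_no_between (f : ℝ → ℝ) (x : ℕ → ℝ) (h : EnumPosZeros f x) (k : ℕ) (hk : 1 ≤ k) :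
    ∀ c, x k < c → c < x (k + 1) → f c ≠ 0 := by
  obtain ⟨hm, hz, hall⟩ := h
  intro c c1 c2 hc
  obtain ⟨j, hj, rfl⟩ := hall c ((hz k hk).1.trans c1) hc
  have h1 := (hm.lt_iff_lt hk hj).1 c1
  have h2 := (hm.lt_iff_lt hj (show 1 ≤ k + 1 by omega)).1 c2
  omega

lemma interlace_abs (F G F' G' : ℝ → ℝ) (x y : ℕ → ℝ)
    (hF : ∀ z, 0 < z → HasDerivAt F (F' z) z) (hG : ∀ z, 0 < z → HasDerivAt G (G' z) z)
    (hFs : ∀ z, 0 < z → F z = 0 → 0 < F' z * G z)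
    (hGs : ∀ z, 0 < z → G z = 0 → G' z * F z < 0)
    (hF0 : ∃ ε > 0, ∀ z, 0 < z → z < ε → 0 < F z)
    (hG0 : ∃ ε > 0, ∀ z, 0 < z → z < ε → 0 < G z)
    (hx : EnumPosZeros F x) (hy : EnumPosZeros G y) :
    ∀ k, 1 ≤ k → y k < x k ∧ x k < y (k + 1) := by
  have hxe := hx
  have hye := hy
  obtain ⟨xm, xz, xall⟩ := hx
  obtain ⟨ym, yz, yall⟩ := hy
  have hbase : y 1 < x 1 := by
    obtain ⟨hx0, hx1⟩ := xz 1 le_rfl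
    have hs := hFs _ hx0 hx1
    have hFno : ∀ c, 0 < c → c < x 1 → F c ≠ 0 := by
      intro c c0 c1 hc
      obtain ⟨j, hj, rfl⟩ := xall c c0 hc
      have := (xm.lt_iff_lt hj (le_refl 1)).1 c1
      have : 1 ≤ j := hj
      omega
    obtain ⟨ε, hε, hp⟩ := hF0
    obtain ⟨ε', hε', hp'⟩ := hG0
    have hGneg : G (x 1) < 0 := by
      by_contra hcon
      push Not at hcon
      have hF'pos : 0 < F' (x 1) := pos_of_mul_pos_left hs hcon
      obtain ⟨c, c1, c2, c3⟩ := left_sign F 0 (x 1) _ hx0 hx1 (hF _ hx0) hF'pos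
      set d := min (ε / 2) (c / 2) with hd
      have d0 : 0 < d := lt_min (by linarith) (by linarith)
      have dc : d < c := lt_of_le_of_lt (min_le_right _ _) (by linarith)
      have dε : d < ε := lt_of_le_of_lt (min_le_left _ _) (by linarith)
      obtain ⟨e, e1, e2, e3⟩ := ivt_zero F d c dc
        (fun z hz => (hF z (lt_of_lt_of_le d0 hz.1)).continuousAt.continuousWithinAt)
        (mul_neg_of_pos_of_neg (hp d d0 dε) c3)
      exact hFno e (by linarith) (by linarith) e3
    set d := min (ε' / 2) (x 1 / 2) with hd
    have d0 : 0 < d := lt_min (by linarith) (by linarith)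
    have dc : d < x 1 := lt_of_le_of_lt (min_le_right _ _) (by linarith)
    have dε : d < ε' := lt_of_le_of_lt (min_le_left _ _) (by linarith)
    obtain ⟨e, e1, e2, e3⟩ := ivt_zero G d (x 1) dc
      (fun z hz => (hG z (lt_of_lt_of_le d0 hz.1)).continuousAt.continuousWithinAt)
      (mul_neg_of_pos_of_neg (hp' d d0 dε) hGneg)
    obtain ⟨j, hj, rfl⟩ := yall e (by linarith) e3
    exact lt_of_le_of_lt ((ym.le_iff_le (le_refl 1) hj).2 hj) e2
  -- a zero of `F` between consecutive zeroes of `G`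
  have hFb : ∀ k, 1 ≤ k → ∃ j, 1 ≤ j ∧ y k < x j ∧ x j < y (k + 1) := by
    intro k hk
    obtain ⟨c, c1, c2, c3⟩ := zero_interlace G F G' (-1) (y k) (y (k + 1)) (yz k hk).1
      (ym hk (show 1 ≤ k + 1 by omega) (Nat.lt_succ_self k)) hG
      (fun z hz => (hF z hz).continuousAt)
      (fun z hz h => by have := hGs z hz h; linarith) (yz k hk).2 (yz (k + 1) (by omega)).2
      (enum_no_between G y hye k hk)
    obtain ⟨j, hj, rfl⟩ := xall c ((yz k hk).1.trans c1) c3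
    exact ⟨j, hj, c1, c2⟩
  have hGb : ∀ k, 1 ≤ k → ∃ j, 1 ≤ j ∧ x k < y j ∧ y j < x (k + 1) := by
    intro k hk
    obtain ⟨c, c1, c2, c3⟩ := zero_interlace F G F' 1 (x k) (x (k + 1)) (xz k hk).1
      (xm hk (show 1 ≤ k + 1 by omega) (Nat.lt_succ_self k)) hF
      (fun z hz => (hG z hz).continuousAt)
      (fun z hz h => by have := hFs z hz h; linarith) (xz k hk).2 (xz (k + 1) (by omega)).2
      (enum_no_between F x hxe k hk)
    obtain ⟨j, hj, rfl⟩ := yall c ((xz k hk).1.trans c1) c3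
    exact ⟨j, hj, c1, c2⟩
  intro k hk
  induction k, hk using Nat.le_induction with
  | base =>
    refine ⟨hbase, ?_⟩
    obtain ⟨j, hj, j1, j2⟩ := hFb 1 le_rfl
    exact lt_of_le_of_lt ((xm.le_iff_le (le_refl 1) hj).2 hj) j2
  | succ k hk ih =>
    have hk1 : 1 ≤ k + 1 := by omega
    have s1 : y (k + 1) < x (k + 1) := by
      obtain ⟨j, hj, j1, j2⟩ := hGb k hk
      have := (ym.lt_iff_lt hk hj).1 (ih.1.trans j1)
      exact lt_of_le_of_lt ((ym.le_iff_le hk1 hj).2 this) j2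
    refine ⟨s1, ?_⟩
    obtain ⟨j, hj, j1, j2⟩ := hFb (k + 1) hk1
    have := (xm.lt_iff_lt hk hj).1 (ih.2.trans j1)
    exact lt_of_le_of_lt ((xm.le_iff_le hk1 hj).2 this) j2

theorem stmt15 (ν : ℝ) (hν : 2 ≤ ν) (k : ℕ) (hk : 1 ≤ k)
    (lampm1 lampm2 : ℕ → ℝ)
    (hlampm1 : EnumPosZeros (fun z => besselJ (ν - 1) z + besselJ ν z) lampm1)
    (hlampm2 : EnumPosZeros (fun z => besselJ (ν - 2) z + besselJ (ν - 1) z) lampm2) :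
    lampm1 (k + 1) < lampm2 (k + 2) ∧ lampm2 (k + 2) < lampm1 (k + 2) := by
  obtain ⟨a, rfl⟩ : ∃ a, ν = a + 1 := ⟨ν - 1, by ring⟩
  have ha : 1 ≤ a := by linarith
  have e1 : a + 1 - 1 = a := by ring
  have e2 : a + 1 - 2 = a - 1 := by ring
  rw [e1] at hlampm1
  rw [e1, e2] at hlampm2
  have hd0 : ∀ z, 0 < z → HasDerivAt (besselJ (a - 1))
      (- besselJ a z + (a - 1) / z * besselJ (a - 1) z) z := by
    intro z hz
    have := bJ_hasDerivAt (a - 1) z (by linarith) hz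
    rwa [sub_add_cancel] at this
  have hd1 : ∀ z, 0 < z → HasDerivAt (besselJ a)
      (- besselJ (a + 1) z + a / z * besselJ a z) z :=
    fun z hz => bJ_hasDerivAt a z (by linarith) hz
  have hd2 : ∀ z, 0 < z → HasDerivAt (besselJ (a + 1))
      (besselJ a z - (a + 1) / z * besselJ (a + 1) z) z := by
    intro z hz
    have := bJ_hasDerivAt (a + 1) z (by linarith) hz
    have hr := bJ_rec (a + 1) z (by linarith) hz
    rw [e1] at hr
    convert this using 1
    have h : 2 * (a + 1) / z = 2 * ((a + 1) / z) := by ring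
    rw [h] at hr
    linarith
  have hpos : ∀ μ, 0 ≤ μ → ∃ ε > 0, ∀ z, 0 < z → z < ε → 0 < besselJ μ z + besselJ (μ + 1) z := by
    intro μ hμ
    obtain ⟨ε, hε, h⟩ := bJ_pos_near μ hμ
    obtain ⟨ε', hε', h'⟩ := bJ_pos_near (μ + 1) (by linarith)
    refine ⟨min ε ε', lt_min hε hε', fun z hz hzl => ?_⟩
    exact add_pos (h z hz (hzl.trans_le (min_le_left _ _))) (h' z hz (hzl.trans_le (min_le_right _ _)))
  have key := interlace_abs (fun z => besselJ a z + besselJ (a + 1) z)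
    (fun z => besselJ (a - 1) z + besselJ a z) _ _ lampm1 lampm2
    (fun z hz => (hd1 z hz).add (hd2 z hz)) (fun z hz => (hd0 z hz).add (hd1 z hz))
    ?_ ?_ (hpos a (by linarith))
    (by have := hpos (a - 1) (by linarith); rwa [sub_add_cancel] at this) hlampm1 hlampm2
  · exact ⟨(key (k + 1) (by omega)).2, (key (k + 2) (by omega)).1⟩
  · intro z hz h
    have hr := bJ_rec a z ha hz
    have h1 : besselJ (a + 1) z = - besselJ a z := by linarith
    have hne : besselJ a z ≠ 0 := fun h0 =>
      bJ_no_common a z (by linarith) hz h0 (by rw [h1, h0, neg_zero])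
    have h2 : besselJ (a - 1) z = (2 * a / z + 1) * besselJ a z := by rw [h1] at hr; linarith
    simp only [h1, h2]
    have : 0 < (2 + (2 * a + 1) / z) * (2 * a / z + 2) * besselJ a z ^ 2 := by positivity
    convert this using 1
    ring
  · intro z hz h
    have hr := bJ_rec a z ha hz
    have h1 : besselJ (a - 1) z = - besselJ a z := by linarith
    have h2 : besselJ (a + 1) z = (2 * a / z + 1) * besselJ a z := by rw [h1] at hr; linarith
    have hne : besselJ a z ≠ 0 := fun h0 =>
      bJ_no_common a z (by linarith) hz h0 (by rw [h2, h0, mul_zero])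
    simp only [h1, h2]
    have h3 : 0 < 2 * a - 1 := by linarith
    have : 0 < (2 + (2 * a - 1) / z) * (2 * a / z + 2) * besselJ a z ^ 2 := by positivity
    rw [← neg_pos]
    convert this using 1
    ring
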